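/- For integers q, k ≥ 1, the winning probability of the greedy strategy in the full game on the deck with q cards of value 1, k cards of value 2, and 1 card of value 3 equals 1/(q+1) + 1/(k+1) - 1/(q+k+1). -/

import Mathlib

/-- The deck of composition `s` as a list of card values:
`s[i]` copies of value `i+1`, in a canonical order. -/
def deckList (s : List ℕ) : List ℕ :=
  (List.range s.length).flatMap fun i => List.replicate (s.getD i 0) (i + 1)

/-- `winsAux strat hist m d = true` iff the player using adaptive strategy `strat`
(a function from the list of previously revealed cards to the next bid)
survives `m` rounds when the remaining deck order is `d`, having already seen `hist`. -/
def winsAux (strat : List ℕ → ℕ) : List ℕ → ℕ → List ℕ → Bool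
  | _, 0, _ => true
  | _, _ + 1, [] => true
  | hist, m + 1, c :: rest =>
      (strat hist != c) && winsAux strat (hist ++ [c]) m rest

/-- Probability that strategy `strat` wins the `m`-round game against the uniformly
shuffled `s`-deck: the fraction of the `c!` orderings of the deck on which it wins. -/
def winProb (strat : List ℕ → ℕ) (s : List ℕ) (m : ℕ) : ℚ :=
  (((deckList s).permutations.countP fun d => winsAux strat [] m d) : ℚ)
    / ((deckList s).length.factorial : ℚ)

/-- Number of cards of value `i` remaining from the `s`-deck after the cards in `hist`
have been dealt. -/
def remCount (s : List ℕ) (hist : List ℕ) (i : ℕ) : ℕ :=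
  s.getD (i - 1) 0 - hist.count i

/-- The canonical greedy strategy for the `s`-deck: name a least frequent remaining value. -/
def greedyStrat (s : List ℕ) (hist : List ℕ) : ℕ :=
  (((List.range' 1 s.length)).argmin (remCount s hist)).getD 1

/-- `g m s`: the probability that the greedy strategy wins the `m`-round `s`-game. -/
def g (m : ℕ) (s : List ℕ) : ℚ :=
  winProb (greedyStrat s) s m

/-- `gFull s`: greedy winning probability when all cards are dealt. -/
def gFull (s : List ℕ) : ℚ :=
  g (deckList s).length s

/-- The strategy naming, in order, value `1` `b 1` times, value `2` `b 2` times, etc. -/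
def bidStrat (b : List ℕ) (hist : List ℕ) : ℕ :=
  (deckList b).getD hist.length 0

/-- `advProb b s`: winning probability of the advance bid vector `b` against the `s`-deck. -/
def advProb (b s : List ℕ) : ℚ :=
  winProb (bidStrat b) s b.sum

/-- `s` majorizes `q`: every partial sum of `s` is at least that of `q`. -/
def Majorizes (s q : List ℕ) : Prop :=
  ∀ i, (q.take i).sum ≤ (s.take i).sum

/-- `Pfun s q = ∏_{i : sᵢ > qᵢ} sᵢ (sᵢ-1) ⋯ (qᵢ+1) = ∏_{i : sᵢ > qᵢ} sᵢ!/qᵢ!`. -/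
def Pfun (s q : List ℕ) : ℕ :=
  (List.zipWith (fun a b => if b < a then a.factorial / b.factorial else 1) s q).prod

/-- `s` with its `i`-th entry decreased by `1`, re-sorted non-increasingly. -/
def downAt (s : List ℕ) (i : ℕ) : List ℕ :=
  ((s.set i (s.getD i 0 - 1)).mergeSort fun a b => decide (b ≤ a))

/-- `strat` plays greedily at position `hist`. -/
def GreedyAt (s : List ℕ) (strat : List ℕ → ℕ) (hist : List ℕ) : Prop :=
  strat hist ∈ List.range' 1 s.length ∧
    ∀ j ∈ List.range' 1 s.length, remCount s hist (strat hist) ≤ remCount s hist j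

/-- `strat` plays anti-greedily at `hist`: it names a most frequent remaining value. -/
def AntiGreedyAt (s : List ℕ) (strat : List ℕ → ℕ) (hist : List ℕ) : Prop :=
  strat hist ∈ List.range' 1 s.length ∧
    ∀ j ∈ List.range' 1 s.length, remCount s hist j ≤ remCount s hist (strat hist)

/-- `hist` is a position reachable with positive probability by `strat` in the `m`-round
`s`-game: it is part of the deck, fewer than `m` cards have been dealt, and `strat`
survived all rounds so far. -/
def Reachable (strat : List ℕ → ℕ) (s : List ℕ) (m : ℕ) (hist : List ℕ) : Prop :=
  hist.length < m ∧ List.Subperm hist (deckList s) ∧ winsAux strat [] hist.length hist = true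

/-- Binomial coefficient with integer lower index (zero when the lower index is negative). -/
def zchoose (n : ℕ) (k : ℤ) : ℕ :=
  if 0 ≤ k then n.choose k.toNat else 0

/-! Condition on the next card. Once some value is exhausted, a greedy player only ever names
exhausted values and wins with certainty. Before that, a greedy player names a value with a single
remaining card. Whichever value that is, drawing it loses and drawing any *other* singleton exhausts
a value, so the player may be assumed to name `3`. Hence the winning probability `w(a, b)` with
`a`, `b` cards `1`, `2` and the card `3` left satisfies
`(a + b + 3) w(a+1, b+1) = (a + 1) w(a, b+1) + (b + 1) w(a+1, b)` and `w(a, 0) = w(0, b) = 1`,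
whose solution is `w(a, b) = 1/(a+1) + 1/(b+1) - 1/(a+b+1)`. -/

open scoped Nat
open List

theorem permutations'_perm_flatMap_erase {α : Type*} [DecidableEq α] {l : List α} (hl : l ≠ []) :
    l.permutations' ~ l.flatMap fun c => (l.erase c).permutations'.map (c :: ·) := by
  induction l with
  | nil => contradiction
  | cons a l ih =>
    obtain rfl | hl := eq_or_ne l []
    · simp
    specialize ih hl
    have erase_cons_perm : ∀ c ∈ l, a :: l.erase c ~ (a :: l).erase c := fun c hc => by
      obtain rfl | hac := eq_or_ne a c
      · simpa using (perm_cons_erase hc).symm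
      · simp [hac]
    calc (a :: l).permutations'
        = l.permutations'.flatMap (permutations'Aux a) := rfl
      _ ~ (l.flatMap fun c => (l.erase c).permutations'.map (c :: ·)).flatMap
            (permutations'Aux a) := ih.flatMap_right _
      _ = l.flatMap fun c => (l.erase c).permutations'.flatMap fun d =>
            (a :: c :: d) :: (permutations'Aux a d).map (c :: ·) := by
          simp only [flatMap_assoc, flatMap_map, permutations'Aux]
      _ ~ l.flatMap fun c => (l.erase c).permutations'.map (a :: c :: ·) ++
            (a :: l.erase c).permutations'.map (c :: ·) := by
          refine Perm.flatMap_left _ fun c _ => ?_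
          simpa only [permutations', map_flatMap] using (map_append_flatMap_perm _ _ _).symm
      _ ~ (l.flatMap fun c => (l.erase c).permutations'.map (a :: c :: ·)) ++
            l.flatMap fun c => (a :: l.erase c).permutations'.map (c :: ·) :=
          (flatMap_append_perm _ _ _).symm
      _ ~ l.permutations'.map (a :: ·) ++
            l.flatMap fun c => ((a :: l).erase c).permutations'.map (c :: ·) := by
          refine Perm.append ?_ (Perm.flatMap_left _ fun c hc =>
            (erase_cons_perm c hc).permutations'.map _)
          simpa [map_flatMap, Function.comp_def] using (ih.map (a :: ·)).symm
      _ = (a :: l).flatMap fun c => ((a :: l).erase c).permutations'.map (c :: ·) := by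
          simp

theorem countP_permutations_eq_sum_erase {α : Type*} [DecidableEq α] {l : List α} (hl : l ≠ [])
    (p : List α → Bool) :
    l.permutations.countP p =
      ∑ c ∈ l.toFinset, l.count c * (l.erase c).permutations.countP fun d => p (c :: d) := by
  have hperm := (permutations_perm_permutations' l).trans (permutations'_perm_flatMap_erase hl)
  rw [hperm.countP_eq, countP_flatMap, Finset.sum_list_map_count]
  simp only [Function.comp_apply, countP_map, smul_eq_mul,
    (permutations_perm_permutations' _).countP_eq, Function.comp_def]

theorem append_singleton_append_erase_perm {α : Type*} [DecidableEq α] {l₁ l₂ : List α} {a : α}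
    (h : a ∈ l₂) : l₁ ++ [a] ++ l₂.erase a ~ l₁ ++ l₂ := by
  rw [append_assoc]
  exact (perm_cons_erase h).symm.append_left l₁

section WinProbFrom

variable {strat : List ℕ → ℕ} {hist d : List ℕ} {m : ℕ}

/-- The conditional probability that `strat` survives `m` more rounds, given that the cards `hist`
have been dealt and that the cards `d`, in uniformly random order, are left. -/
def winProbFrom (strat : List ℕ → ℕ) (hist : List ℕ) (m : ℕ) (d : List ℕ) : ℚ :=
  (d.permutations.countP fun e => winsAux strat hist m e) / (d.length ! : ℚ)

theorem winProbFrom_eq_one (h : ∀ e, e ~ d → winsAux strat hist m e) :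
    winProbFrom strat hist m d = 1 := by
  have hall : (d.permutations.countP fun e => winsAux strat hist m e) = d.length ! := by
    rw [← length_permutations, countP_eq_length]
    exact fun e he => h e (mem_permutations.1 he)
  rw [winProbFrom, hall, div_self (by positivity)]

theorem length_mul_winProbFrom_succ :
    d.length * winProbFrom strat hist (m + 1) d =
      ∑ c ∈ d.toFinset.erase (strat hist),
        d.count c * winProbFrom strat (hist ++ [c]) m (d.erase c) := by
  obtain rfl | hd := eq_or_ne d []
  · simp
  obtain ⟨n, hn⟩ := Nat.exists_eq_add_one_of_ne_zero (mt length_eq_zero_iff.1 hd)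
  have count_first (c : ℕ) :
      ((d.erase c).permutations.countP fun e => winsAux strat hist (m + 1) (c :: e)) =
        if c = strat hist then 0
        else (d.erase c).permutations.countP fun e => winsAux strat (hist ++ [c]) m e := by
    split_ifs with hc
    · simp [winsAux, hc]
    · simp [winsAux, bne_iff_ne.2 (Ne.symm hc)]
  have length_erase {c : ℕ} (hc : c ∈ d.toFinset) : (d.erase c).length = n := by
    rw [length_erase_of_mem (mem_toFinset.1 hc), hn, Nat.add_sub_cancel]
  have hfact : ((n + 1 : ℕ) : ℚ) / (n + 1)! = 1 / n ! := by
    rw [Nat.factorial_succ]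
    push_cast
    field_simp
  rw [winProbFrom, countP_permutations_eq_sum_erase hd, hn, ← mul_div_assoc, mul_div_right_comm,
    hfact, Nat.cast_sum, Finset.mul_sum, ← Finset.filter_ne', Finset.sum_filter]
  refine Finset.sum_congr rfl fun c hc => ?_
  rw [count_first, winProbFrom, length_erase hc]
  obtain hbid | hbid := eq_or_ne c (strat hist)
  · simp [hbid]
  · rw [if_neg hbid, if_pos hbid]
    push_cast
    ring

end WinProbFrom

section Greedy

variable {s hist d : List ℕ} {strat : List ℕ → ℕ}

theorem mem_range'_of_mem_deckList {v : ℕ} (hv : v ∈ deckList s) : v ∈ range' 1 s.length := by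
  simp only [deckList, mem_flatMap, mem_range, mem_replicate] at hv
  obtain ⟨i, hi, -, rfl⟩ := hv
  rw [mem_range'_1]
  lia

theorem count_deckList {i : ℕ} (hi : 1 ≤ i) : (deckList s).count i = s.getD (i - 1) 0 := by
  obtain ⟨i, rfl⟩ := Nat.exists_eq_add_of_le' hi
  calc (deckList s).count (i + 1)
      = ∑ j ∈ Finset.range s.length, if j = i then s.getD j 0 else 0 := by
        simp [deckList, count_flatMap, count_replicate, Function.comp_def,
          Finset.sum, Finset.range, Multiset.range]
    _ = s.getD i 0 := by
        by_cases h : i < s.length <;> simp [h]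

theorem remCount_eq_count (hd : hist ++ d ~ deckList s) {i : ℕ} (hi : 1 ≤ i) :
    remCount s hist i = d.count i := by
  rw [remCount, ← count_deckList hi, ← hd.count_eq, count_append, Nat.add_sub_cancel_left]

theorem greedyAt_greedyStrat (hs : s ≠ []) (hist : List ℕ) : GreedyAt s (greedyStrat s) hist := by
  have hne : (range' 1 s.length).argmin (remCount s hist) ≠ none := by
    simpa [argmin_eq_none] using hs
  obtain ⟨v, hv⟩ := Option.ne_none_iff_exists'.1 hne
  have hstrat : greedyStrat s hist = v := by simp [greedyStrat, hv]
  rw [GreedyAt, hstrat]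
  exact ⟨argmin_mem hv, fun j hj => le_of_mem_argmin hj hv⟩

theorem GreedyAt.count_le (hgreedy : GreedyAt s strat hist) (hd : hist ++ d ~ deckList s) {v : ℕ}
    (hv : v ∈ range' 1 s.length) : d.count (strat hist) ≤ d.count v := by
  have h := hgreedy.2 v hv
  rwa [remCount_eq_count hd (mem_range'_1.1 hgreedy.1).1,
    remCount_eq_count hd (mem_range'_1.1 hv).1] at h

theorem winsAux_of_notMem (hgreedy : ∀ hist, GreedyAt s strat hist) {v : ℕ}
    (hv : v ∈ range' 1 s.length) (hd : hist ++ d ~ deckList s) (hvd : v ∉ d) (m : ℕ) :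
    winsAux strat hist m d := by
  induction d generalizing hist m with
  | nil => cases m <;> rfl
  | cons c d ih =>
    cases m with
    | zero => rfl
    | succ m =>
      have hbid : strat hist ∉ c :: d := by
        simpa [count_eq_zero.2 hvd, count_eq_zero] using (hgreedy hist).count_le hd hv
      have hrest : winsAux strat (hist ++ [c]) m d :=
        ih (by simpa using hd) (not_mem_of_not_mem_cons hvd) m
      simp [winsAux, ne_of_not_mem_cons hbid, hrest]

theorem winProbFrom_eq_one_of_notMem (hgreedy : ∀ hist, GreedyAt s strat hist) {v : ℕ}
    (hv : v ∈ range' 1 s.length) (hd : hist ++ d ~ deckList s) (hvd : v ∉ d) (m : ℕ) :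
    winProbFrom strat hist m d = 1 :=
  winProbFrom_eq_one fun _ he =>
    winsAux_of_notMem hgreedy hv ((he.append_left hist).trans hd) (mt he.mem_iff.1 hvd) m

theorem winProbFrom_eq_one_after_singleton (hgreedy : ∀ hist, GreedyAt s strat hist) {v : ℕ}
    (hd : hist ++ d ~ deckList s) (hv : d.count v = 1) (m : ℕ) :
    winProbFrom strat (hist ++ [v]) m (d.erase v) = 1 := by
  have hvd : v ∈ d := count_pos_iff.1 (by lia)
  have herased : v ∉ d.erase v := by simp [← count_eq_zero, hv]
  have hvrange : v ∈ range' 1 s.length :=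
    mem_range'_of_mem_deckList (hd.subset (mem_append_right hist hvd))
  exact winProbFrom_eq_one_of_notMem hgreedy hvrange
    ((append_singleton_append_erase_perm hvd).trans hd) herased m

theorem length_mul_winProbFrom_succ_of_singleton (hgreedy : ∀ hist, GreedyAt s strat hist)
    (hd : hist ++ d ~ deckList s) (hall : ∀ v ∈ range' 1 s.length, v ∈ d) {w : ℕ}
    (hw : d.count w = 1) (m : ℕ) :
    d.length * winProbFrom strat hist (m + 1) d =
      ∑ c ∈ d.toFinset.erase w,
        d.count c * winProbFrom strat (hist ++ [c]) m (d.erase c) := by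
  have hwd : w ∈ d := count_pos_iff.1 (by lia)
  have hbid : strat hist ∈ d := hall _ (hgreedy hist).1
  have hwrange : w ∈ range' 1 s.length :=
    mem_range'_of_mem_deckList (hd.subset (mem_append_right hist hwd))
  have hbid_count : d.count (strat hist) = 1 :=
    le_antisymm (hw ▸ (hgreedy hist).count_le hd hwrange) (count_pos_iff.2 hbid)
  rw [length_mul_winProbFrom_succ, Finset.sum_erase_eq_sub (mem_toFinset.2 hbid),
    Finset.sum_erase_eq_sub (mem_toFinset.2 hwd), hw, hbid_count,
    winProbFrom_eq_one_after_singleton hgreedy hd hw,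
    winProbFrom_eq_one_after_singleton hgreedy hd hbid_count]

end Greedy

/-- The closed form for the greedy winning probability while the only card `3` is undealt and
`a`, `b` cards of values `1`, `2` are left. -/
def singletonWinProb (a b : ℕ) : ℚ :=
  1 / (a + 1) + 1 / (b + 1) - 1 / (a + b + 1)

theorem singletonWinProb_zero_left (b : ℕ) : singletonWinProb 0 b = 1 := by
  simp [singletonWinProb]

theorem singletonWinProb_zero_right (a : ℕ) : singletonWinProb a 0 = 1 := by
  simp [singletonWinProb]

theorem singletonWinProb_succ_succ (a b : ℕ) :
    (a + b + 3) * singletonWinProb (a + 1) (b + 1) =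
      (a + 1) * singletonWinProb a (b + 1) + (b + 1) * singletonWinProb (a + 1) b := by
  simp only [singletonWinProb]
  push_cast
  field_simp
  ring

section SingletonDeck

variable {q k : ℕ} {strat : List ℕ → ℕ} {hist d : List ℕ}

theorem count_three_eq_one (hd : hist ++ d ~ deckList [q, k, 1]) (h3 : 3 ∈ d) :
    d.count 3 = 1 := by
  have hle : d.count 3 ≤ (deckList [q, k, 1]).count 3 :=
    ((sublist_append_right hist d).count_le 3).trans_eq (hd.count_eq 3)
  exact le_antisymm (by simpa [count_deckList] using hle) (count_pos_iff.2 h3)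

theorem toFinset_eq_one_two_three (hd : hist ++ d ~ deckList [q, k, 1])
    (h1 : 1 ∈ d) (h2 : 2 ∈ d) (h3 : 3 ∈ d) : d.toFinset = {1, 2, 3} := by
  ext v
  simp only [mem_toFinset, Finset.mem_insert, Finset.mem_singleton]
  refine ⟨fun hv => ?_, ?_⟩
  · simpa [range'_succ] using mem_range'_of_mem_deckList (hd.subset (mem_append_right hist hv))
  · rintro (rfl | rfl | rfl) <;> assumption

theorem winProbFrom_recursion (hgreedy : ∀ hist, GreedyAt [q, k, 1] strat hist)
    (hd : hist ++ d ~ deckList [q, k, 1]) (h3 : 3 ∈ d) {a b : ℕ}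
    (ha : d.count 1 = a + 1) (hb : d.count 2 = b + 1) (m : ℕ) :
    (a + b + 3) * winProbFrom strat hist (m + 1) d =
      (a + 1) * winProbFrom strat (hist ++ [1]) m (d.erase 1) +
        (b + 1) * winProbFrom strat (hist ++ [2]) m (d.erase 2) := by
  have hvalues : d.toFinset = {1, 2, 3} :=
    toFinset_eq_one_two_three hd (count_pos_iff.1 (by lia)) (count_pos_iff.1 (by lia)) h3
  have hcount3 : d.count 3 = 1 := count_three_eq_one hd h3
  have hlength : d.length = a + b + 3 := by
    rw [← sum_toFinset_count_eq_length, hvalues, Finset.sum_insert (by decide),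
      Finset.sum_pair (by decide), ha, hb, hcount3]
    lia
  have hall : ∀ v ∈ range' 1 [q, k, 1].length, v ∈ d := fun v hv => by
    simpa [← mem_toFinset, hvalues, range'_succ] using hv
  have hrec := length_mul_winProbFrom_succ_of_singleton hgreedy hd hall hcount3 m
  have herase : ({1, 2, 3} : Finset ℕ).erase 3 = {1, 2} := by decide
  rw [hvalues, herase, Finset.sum_pair (by decide), hlength, ha, hb] at hrec
  exact_mod_cast hrec

theorem winProbFrom_eq_singletonWinProb (hgreedy : ∀ hist, GreedyAt [q, k, 1] strat hist)
    (hd : hist ++ d ~ deckList [q, k, 1]) (h3 : 3 ∈ d) :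
    winProbFrom strat hist d.length d = singletonWinProb (d.count 1) (d.count 2) := by
  induction hn : d.length generalizing hist d with
  | zero => simp [length_eq_zero_iff.1 hn] at h3
  | succ n ih =>
    have ih_draw {c : ℕ} (hc : c ∈ d) (hc3 : 3 ≠ c) :
        winProbFrom strat (hist ++ [c]) n (d.erase c) =
          singletonWinProb ((d.erase c).count 1) ((d.erase c).count 2) :=
      ih ((append_singleton_append_erase_perm hc).trans hd) ((mem_erase_of_ne hc3).2 h3)
        (by rw [length_erase_of_mem hc, hn, Nat.add_sub_cancel])
    rcases ha : d.count 1 with _ | a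
    · rw [winProbFrom_eq_one_of_notMem hgreedy (by simp) hd (count_eq_zero.1 ha),
        singletonWinProb_zero_left]
    rcases hb : d.count 2 with _ | b
    · rw [winProbFrom_eq_one_of_notMem hgreedy (by simp) hd (count_eq_zero.1 hb),
        singletonWinProb_zero_right]
    have hrec := winProbFrom_recursion hgreedy hd h3 ha hb n
    rw [ih_draw (count_pos_iff.1 (by lia)) (by decide),
      ih_draw (count_pos_iff.1 (by lia)) (by decide)] at hrec
    simp only [count_erase_self, count_erase_of_ne, ne_eq, OfNat.one_ne_ofNat,
      OfNat.ofNat_ne_one, not_false_eq_true, ha, hb, Nat.add_sub_cancel] at hrec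
    exact mul_left_cancel₀ (by positivity) (hrec.trans (singletonWinProb_succ_succ a b).symm)

end SingletonDeck

theorem stmt12_general (q k : ℕ) {strat : List ℕ → ℕ}
    (hgreedy : ∀ hist, GreedyAt [q, k, 1] strat hist) :
    winProb strat [q, k, 1] (deckList [q, k, 1]).length =
      1 / ((q : ℚ) + 1) + 1 / ((k : ℚ) + 1) - 1 / ((q : ℚ) + k + 1) := by
  have h3 : 3 ∈ deckList [q, k, 1] := by simp [← count_pos_iff, count_deckList]
  calc winProb strat [q, k, 1] (deckList [q, k, 1]).length
      = winProbFrom strat [] (deckList [q, k, 1]).length (deckList [q, k, 1]) := rfl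
    _ = singletonWinProb ((deckList [q, k, 1]).count 1) ((deckList [q, k, 1]).count 2) :=
        winProbFrom_eq_singletonWinProb hgreedy (.refl _) h3
    _ = singletonWinProb q k := by
        rw [count_deckList le_rfl, count_deckList one_le_two]
        rfl
    _ = 1 / ((q : ℚ) + 1) + 1 / ((k : ℚ) + 1) - 1 / ((q : ℚ) + k + 1) := rfl

/-- `g(q,k,1) = 1/(q+1) + 1/(k+1) - 1/(q+k+1)`. -/
theorem stmt12 (q k : ℕ) (hq : 1 ≤ q) (hk : 1 ≤ k) :
    gFull [q, k, 1]
      = 1 / ((q : ℚ) + 1) + 1 / ((k : ℚ) + 1) - 1 / ((q : ℚ) + k + 1) :=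
  stmt12_general q k (greedyAt_greedyStrat (cons_ne_nil _ _))
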